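/- (Change of independent variables / Main Proposition 1.) Let Φ = (w₁,w₂) : Ω → Ω' be a holomorphic map between open subsets of ℂ² with Jacobian determinant D := ∂ₓw₁·∂ᵧw₂ − ∂ₓw₂·∂ᵧw₁ ≠ 0 on Ω, and such that J(w₁,w₂) computed in the variables (x,y) is nonzero; let u₁,u₂ : Ω' → ℂ be holomorphic with J(u₁,u₂) (computed in the variables (w₁,w₂)) nonzero on Ω'. Let ũᵢ := uᵢ ∘ Φ. Then at every point of Ω the column vector ({ũ₁,ũ₂;x,y}ₓ, {ũ₁,ũ₂;x,y}ᵧ, [ũ₁,ũ₂;x,y]ₓ, [ũ₁,ũ₂;x,y]ᵧ)ᵀ equals (1/D)·M(w₁,w₂;x,y) applied to the column vector ({u₁,u₂;w₁,w₂}_{w₁}, {u₁,u₂;w₁,w₂}_{w₂}, [u₁,u₂;w₁,w₂]_{w₁}, [u₁,u₂;w₁,w₂]_{w₂})ᵀ evaluated at Φ(x,y), plus the column vector ({w₁,w₂;x,y}ₓ, {w₁,w₂;x,y}ᵧ, [w₁,w₂;x,y]ₓ, [w₁,w₂;x,y]ᵧ)ᵀ. -/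

import Mathlib

open Complex Matrix

noncomputable section

/-- Partial derivative in the first complex variable. -/
def pdx (f : ℂ × ℂ → ℂ) (p : ℂ × ℂ) : ℂ := deriv (fun x => f (x, p.2)) p.1

/-- Partial derivative in the second complex variable. -/
def pdy (f : ℂ × ℂ → ℂ) (p : ℂ × ℂ) : ℂ := deriv (fun y => f (p.1, y)) p.2

/-- The Jacobian `J(u₁,u₂) = ∂ₓu₁·∂ᵧu₂ − ∂ₓu₂·∂ᵧu₁`. -/
def Jac (u₁ u₂ : ℂ × ℂ → ℂ) (p : ℂ × ℂ) : ℂ :=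
  pdx u₁ p * pdy u₂ p - pdx u₂ p * pdy u₁ p

/-- The GL(3) derivative `{u₁,u₂;x,y}ₓ`. -/
def brX (u₁ u₂ : ℂ × ℂ → ℂ) (p : ℂ × ℂ) : ℂ :=
  (pdx u₁ p * pdx (pdx u₂) p - pdx u₂ p * pdx (pdx u₁) p) / Jac u₁ u₂ p

/-- The GL(3) derivative `{u₁,u₂;x,y}ᵧ`. -/
def brY (u₁ u₂ : ℂ × ℂ → ℂ) (p : ℂ × ℂ) : ℂ :=
  -(pdy u₁ p * pdy (pdy u₂) p - pdy u₂ p * pdy (pdy u₁) p) / Jac u₁ u₂ p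

/-- The GL(3) derivative `[u₁,u₂;x,y]ₓ`. -/
def sqX (u₁ u₂ : ℂ × ℂ → ℂ) (p : ℂ × ℂ) : ℂ :=
  ((pdy u₁ p * pdx (pdx u₂) p - pdy u₂ p * pdx (pdx u₁) p)
      + 2 * (pdx u₁ p * pdx (pdy u₂) p - pdx u₂ p * pdx (pdy u₁) p)) / Jac u₁ u₂ p

/-- The GL(3) derivative `[u₁,u₂;x,y]ᵧ`. -/
def sqY (u₁ u₂ : ℂ × ℂ → ℂ) (p : ℂ × ℂ) : ℂ :=
  -((pdx u₁ p * pdy (pdy u₂) p - pdx u₂ p * pdy (pdy u₁) p)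
      + 2 * (pdy u₁ p * pdx (pdy u₂) p - pdy u₂ p * pdx (pdy u₁) p)) / Jac u₁ u₂ p

/-- The 4×4 matrix `M(w₁,w₂;x,y)` built from the first partial derivatives of
the holomorphic map `(w₁,w₂)`. -/
def Mmat (w₁ w₂ : ℂ × ℂ → ℂ) (p : ℂ × ℂ) : Matrix (Fin 4) (Fin 4) ℂ :=
  !![(pdx w₁ p) ^ 3, -(pdx w₂ p) ^ 3, (pdx w₁ p) ^ 2 * pdx w₂ p,
        -(pdx w₁ p) * (pdx w₂ p) ^ 2;
     -(pdy w₁ p) ^ 3, (pdy w₂ p) ^ 3, -(pdy w₁ p) ^ 2 * pdy w₂ p,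
        (pdy w₁ p) * (pdy w₂ p) ^ 2;
     3 * (pdx w₁ p) ^ 2 * pdy w₁ p, -3 * (pdx w₂ p) ^ 2 * pdy w₂ p,
        (pdx w₁ p) ^ 2 * pdy w₂ p + 2 * pdx w₁ p * pdx w₂ p * pdy w₁ p,
        -(pdx w₂ p) ^ 2 * pdy w₁ p - 2 * pdx w₁ p * pdx w₂ p * pdy w₂ p;
     -3 * pdx w₁ p * (pdy w₁ p) ^ 2, 3 * pdx w₂ p * (pdy w₂ p) ^ 2,
        -(pdx w₂ p) * (pdy w₁ p) ^ 2 - 2 * pdx w₁ p * pdy w₁ p * pdy w₂ p,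
        (pdx w₁ p) * (pdy w₂ p) ^ 2 + 2 * pdx w₂ p * pdy w₁ p * pdy w₂ p]

/-- The column vector of the four GL(3) derivatives of the pair `(u₁,u₂)`. -/
def Vvec (u₁ u₂ : ℂ × ℂ → ℂ) (p : ℂ × ℂ) : Fin 4 → ℂ :=
  ![brX u₁ u₂ p, brY u₁ u₂ p, sqX u₁ u₂ p, sqY u₁ u₂ p]

/-!
The four GL(3) derivatives of `(u₁, u₂)` are, up to sign, the coefficients of the binary cubic form
`v ↦ det (U'(p) v, U''(p) (v, v)) / J(u₁, u₂)(p)` attached to `U = (u₁, u₂)`. For a composite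
`U ∘ Φ` the chain rule gives `(U ∘ Φ)' v = U' (Φ' v)` and
`(U ∘ Φ)'' (v, v) = U'' (Φ' v, Φ' v) + U' (Φ'' (v, v))`, so that
`det ((U ∘ Φ)' v, (U ∘ Φ)'' (v, v))` is the form of `U` at `Φ' v` plus `det U'` times the form of
`Φ` at `v`. Dividing by `J(U ∘ Φ) = J(U) D` and comparing coefficients proves the theorem, `M` being
the matrix of the substitution `v ↦ Φ' v` on binary cubic forms.

Second derivatives exist because holomorphic functions of several variables are smooth: a
directional derivative is a Cauchy integral, which depends holomorphically on the base point.
-/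

section Holomorphic

open Metric Set Filter Topology MeasureTheory Function
open scoped ContDiff

variable {E F : Type*} [NormedAddCommGroup E] [NormedSpace ℂ E]
  [NormedAddCommGroup F] [NormedSpace ℂ F]

theorem norm_fderiv_le_two_mul_div_of_norm_le {f : E → F} {c : E} {R C : ℝ} (hR : 0 < R)
    (hf : DifferentiableOn ℂ f (ball c R)) (hC : ∀ z ∈ ball c R, ‖f z‖ ≤ C) :
    ‖fderiv ℂ f c‖ ≤ 2 * C / R := by
  refine norm_fderiv_le_div_of_mapsTo_ball hf (fun z hz => ?_) hR
  rw [mem_closedBall_iff_norm, two_mul]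
  exact norm_sub_le_of_le (hC z hz) (hC c (mem_ball_self hR))

theorem continuousOn_fderiv_of_continuousOn_uncurry [ProperSpace E] {X : Type*}
    [PseudoMetricSpace X] {G : E → X → F} {U : Set E} {K : Set X} {p : E} (hU : IsOpen U)
    (hK : IsCompact K) (hG : ∀ x ∈ K, DifferentiableOn ℂ (G · x) U)
    (hcont : ContinuousOn (uncurry G) (U ×ˢ K)) (hp : p ∈ U) :
    ContinuousOn (fun x => fderiv ℂ (G · x) p) K := by
  obtain ⟨R, hR, hball⟩ := nhds_basis_closedBall.mem_iff.1 (hU.mem_nhds hp)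
  have hunif : UniformContinuousOn (uncurry G) (closedBall p R ×ˢ K) :=
    ((isCompact_closedBall p R).prod hK).uniformContinuousOn_of_continuous
      (hcont.mono (prod_mono_left hball))
  refine Metric.continuousOn_iff.2 fun x₀ hx₀ ε hε => ?_
  obtain ⟨δ, hδ, hGδ⟩ := Metric.uniformContinuousOn_iff.1 hunif (ε / 4 * R) (by positivity)
  refine ⟨δ, hδ, fun x hx hdist => ?_⟩
  have hdiff : ∀ x ∈ K, DifferentiableOn ℂ (G · x) (ball p R) := fun x hx =>
    (hG x hx).mono (ball_subset_closedBall.trans hball)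
  have hclose : ∀ q ∈ ball p R, ‖G q x - G q x₀‖ ≤ ε / 4 * R := fun q hq => by
    have hq' := ball_subset_closedBall hq
    have hqx : dist (q, x) (q, x₀) < δ := by simpa using hdist
    simpa [dist_eq_norm] using (hGδ (q, x) ⟨hq', hx⟩ (q, x₀) ⟨hq', hx₀⟩ hqx).le
  have hp_nhds := ball_mem_nhds p hR
  calc dist (fderiv ℂ (G · x) p) (fderiv ℂ (G · x₀) p)
      = ‖fderiv ℂ (fun q => G q x - G q x₀) p‖ := by
        rw [dist_eq_norm, fderiv_fun_sub ((hdiff x hx).differentiableAt hp_nhds)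
          ((hdiff x₀ hx₀).differentiableAt hp_nhds)]
    _ ≤ 2 * (ε / 4 * R) / R :=
        norm_fderiv_le_two_mul_div_of_norm_le hR ((hdiff x hx).sub (hdiff x₀ hx₀)) hclose
    _ < ε := by field_simp; linarith

theorem exists_norm_fderiv_le_of_continuousOn_uncurry [ProperSpace E] {X : Type*}
    [TopologicalSpace X] {G : E → X → F} {U : Set E} {K : Set X} {p₀ : E} (hU : IsOpen U)
    (hK : IsCompact K) (hG : ∀ x ∈ K, DifferentiableOn ℂ (G · x) U)
    (hcont : ContinuousOn (uncurry G) (U ×ˢ K)) (hp₀ : p₀ ∈ U) :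
    ∃ C, ∀ᶠ p in 𝓝 p₀, ∀ x ∈ K, ‖fderiv ℂ (G · x) p‖ ≤ C := by
  obtain ⟨R, hR, hball⟩ := nhds_basis_closedBall.mem_iff.1 (hU.mem_nhds hp₀)
  obtain ⟨C, hC⟩ := ((isCompact_closedBall p₀ R).prod hK).exists_bound_of_continuousOn
    (hcont.mono (prod_mono_left hball))
  refine ⟨2 * C / (R / 2), ?_⟩
  filter_upwards [ball_mem_nhds p₀ (half_pos hR)] with p hp x hx
  have hsub : ball p (R / 2) ⊆ closedBall p₀ R :=
    (ball_subset_ball' (by linarith [mem_ball.1 hp])).trans ball_subset_closedBall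
  exact norm_fderiv_le_two_mul_div_of_norm_le (half_pos hR) ((hG x hx).mono (hsub.trans hball))
    fun q hq => hC (q, x) ⟨hsub hq, hx⟩

theorem differentiableOn_circleIntegral_of_continuousOn_uncurry [ProperSpace E]
    {G : E → ℂ → F} {U : Set E} {c : ℂ} {r : ℝ} (hr : 0 ≤ r) (hU : IsOpen U)
    (hG : ∀ z ∈ sphere c r, DifferentiableOn ℂ (G · z) U)
    (hcont : ContinuousOn (uncurry G) (U ×ˢ sphere c r)) :
    DifferentiableOn ℂ (fun p => ∮ z in C(c, r), G p z) U := by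
  intro p₀ hp₀
  have hcirc (θ : ℝ) : circleMap c r θ ∈ sphere c r := circleMap_mem_sphere c hr θ
  have hk : Continuous fun θ => deriv (circleMap c r) θ := by
    simp only [deriv_circleMap]
    fun_prop
  have hGcont : ∀ p ∈ U, Continuous fun θ => deriv (circleMap c r) θ • G p (circleMap c r θ) :=
    fun p hp => hk.smul <| hcont.comp_continuous (f := fun θ => (p, circleMap c r θ))
      (by fun_prop) fun θ => ⟨hp, hcirc θ⟩
  have hG'cont : Continuous fun θ =>
      deriv (circleMap c r) θ • fderiv ℂ (G · (circleMap c r θ)) p₀ :=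
    hk.smul <| (continuousOn_fderiv_of_continuousOn_uncurry hU (isCompact_sphere c r) hG hcont
      hp₀).comp_continuous (continuous_circleMap c r) hcirc
  obtain ⟨C, hC⟩ :=
    exists_norm_fderiv_le_of_continuousOn_uncurry hU (isCompact_sphere c r) hG hcont hp₀
  have hderiv := intervalIntegral.hasFDerivAt_integral_of_dominated_of_fderiv_le (𝕜 := ℂ)
    (μ := volume) (a := 0) (b := 2 * Real.pi) (bound := fun θ => ‖deriv (circleMap c r) θ‖ * C)
    (F := fun p θ => deriv (circleMap c r) θ • G p (circleMap c r θ))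
    (F' := fun p θ => deriv (circleMap c r) θ • fderiv ℂ (G · (circleMap c r θ)) p)
    (hC.and (hU.mem_nhds hp₀))
    (by filter_upwards [hU.mem_nhds hp₀] with p hp using (hGcont p hp).aestronglyMeasurable)
    ((hGcont p₀ hp₀).intervalIntegrable _ _)
    hG'cont.aestronglyMeasurable
    (ae_of_all _ fun θ _ p hp => by
      rw [norm_smul]
      exact mul_le_mul_of_nonneg_left (hp.1 _ (hcirc θ)) (norm_nonneg _))
    ((hk.norm.mul continuous_const).intervalIntegrable _ _)
    (ae_of_all _ fun θ _ p hp => ((hG _ (hcirc θ)).differentiableAt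
      (hU.mem_nhds hp.2)).hasFDerivAt.const_smul _)
  exact hderiv.differentiableAt.differentiableWithinAt

theorem fderiv_apply_eq_circleIntegral [CompleteSpace F] {f : E → F} {U : Set E} {p v : E} {r : ℝ}
    (hf : DifferentiableOn ℂ f U) (hU : IsOpen U) (hr : 0 < r)
    (hdisc : ∀ z ∈ closedBall (0 : ℂ) r, p + z • v ∈ U) :
    fderiv ℂ f p v =
      (2 * Real.pi * I : ℂ)⁻¹ • ∮ z in C(0, r), ((z - 0) ^ 2)⁻¹ • f (p + z • v) := by
  have hline : ∀ z : ℂ, p + z • v ∈ U → HasDerivAt (fun z : ℂ => f (p + z • v))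
      (fderiv ℂ f (p + z • v) v) z := fun z hz =>
    (hf.differentiableAt (hU.mem_nhds hz)).hasFDerivAt.comp_hasDerivAt z <| by
      simpa using ((hasDerivAt_id z).smul_const v).const_add p
  have h₀ := (hline 0 (hdisc 0 (mem_closedBall_self hr.le))).deriv
  rw [zero_smul, add_zero] at h₀
  rw [← h₀]
  exact (two_pi_I_inv_smul_circleIntegral_sub_sq_inv_smul_of_differentiable
    (hU.preimage (by fun_prop : Continuous fun z : ℂ => p + z • v)) hdisc
    (fun z hz => (hline z hz).differentiableAt.differentiableWithinAt) (mem_ball_self hr)).symm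

theorem differentiableOn_fderiv_apply [ProperSpace E] [CompleteSpace F] {f : E → F} {U : Set E}
    (hf : DifferentiableOn ℂ f U) (hU : IsOpen U) (v : E) :
    DifferentiableOn ℂ (fun p => fderiv ℂ f p v) U := by
  intro p₀ hp₀
  obtain ⟨R, hR, hball⟩ := Metric.isOpen_iff.1 hU p₀ hp₀
  obtain ⟨r, hr, hrv⟩ : ∃ r : ℝ, 0 < r ∧ r * ‖v‖ ≤ R / 2 := by
    refine ⟨R / 2 / (‖v‖ + 1), by positivity, ?_⟩
    rw [div_mul_eq_mul_div, div_le_iff₀ (by positivity)]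
    nlinarith
  have hmem : ∀ p ∈ ball p₀ (R / 2), ∀ z ∈ closedBall (0 : ℂ) r, p + z • v ∈ U := by
    intro p hp z hz
    have hzv : ‖z • v‖ ≤ R / 2 := by
      rw [norm_smul]
      exact (mul_le_mul_of_nonneg_right (mem_closedBall_zero_iff.1 hz) (norm_nonneg v)).trans hrv
    refine hball (mem_ball.2 ((dist_triangle _ p _).trans_lt ?_))
    rw [dist_self_add_left]
    linarith [mem_ball.1 hp]
  have hmaps : MapsTo (fun x : E × ℂ => x.1 + x.2 • v) (ball p₀ (R / 2) ×ˢ sphere 0 r) U :=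
    fun x hx => hmem x.1 hx.1 x.2 (sphere_subset_closedBall hx.2)
  have hint : DifferentiableOn ℂ (fun p => ∮ z in C(0, r), ((z - 0) ^ 2)⁻¹ • f (p + z • v))
      (ball p₀ (R / 2)) := by
    refine differentiableOn_circleIntegral_of_continuousOn_uncurry hr.le isOpen_ball
      (fun z hz => (hf.comp (by fun_prop) fun p hp => hmaps (mk_mem_prod hp hz)).const_smul _) ?_
    refine ContinuousOn.smul (ContinuousOn.inv₀ (by fun_prop) fun x hx => ?_)
      (hf.continuousOn.comp (by fun_prop) hmaps)
    exact pow_ne_zero 2 (sub_ne_zero.2 (ne_of_mem_sphere hx.2 hr.ne'))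
  have hnhds := ball_mem_nhds p₀ (half_pos hR)
  refine ((hint.differentiableAt hnhds).const_smul (2 * Real.pi * I : ℂ)⁻¹).congr_of_eventuallyEq
    ?_ |>.differentiableWithinAt
  filter_upwards [hnhds] with p hp using fderiv_apply_eq_circleIntegral hf hU hr (hmem p hp)

theorem contDiffOn_infty_of_differentiableOn [FiniteDimensional ℂ E] [CompleteSpace F]
    {f : E → F} {U : Set E} (hf : DifferentiableOn ℂ f U) (hU : IsOpen U) :
    ContDiffOn ℂ ∞ f U := by
  have : ProperSpace E := FiniteDimensional.proper ℂ E
  refine contDiffOn_infty.2 fun n => ?_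
  induction n generalizing f with
  | zero => exact contDiffOn_zero.2 hf.continuousOn
  | succ n ih =>
    push_cast
    refine contDiffOn_succ_of_fderiv_apply hf (by simp) fun v => ?_
    exact (ih (differentiableOn_fderiv_apply hf hU v)).congr fun p hp => by
      rw [fderivWithin_of_isOpen hU hp]

end Holomorphic

section SecondDerivative

open Filter Topology

variable {𝕜 E F G : Type*} [NontriviallyNormedField 𝕜] [NormedAddCommGroup E] [NormedSpace 𝕜 E]
  [NormedAddCommGroup F] [NormedSpace 𝕜 F] [NormedAddCommGroup G] [NormedSpace 𝕜 G] {x : E}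

theorem eventually_differentiableAt_of_contDiffAt_two {f : E → F} (hf : ContDiffAt 𝕜 2 f x) :
    ∀ᶠ y in 𝓝 x, DifferentiableAt 𝕜 f y :=
  (hf.eventually (by simp)).mono fun _ hy => hy.differentiableAt (by simp)

theorem hasFDerivAt_fderiv_of_contDiffAt_two {f : E → F} (hf : ContDiffAt 𝕜 2 f x) :
    HasFDerivAt (fderiv 𝕜 f) (fderiv 𝕜 (fderiv 𝕜 f) x) x :=
  ((hf.fderiv_right (m := 1) (by norm_num)).differentiableAt (by simp)).hasFDerivAt

theorem hasFDerivAt_fderiv_apply_const {f : E → F} (hf : ContDiffAt 𝕜 2 f x) (v : E) :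
    HasFDerivAt (fun y => fderiv 𝕜 f y v) ((fderiv 𝕜 (fderiv 𝕜 f) x).flip v) x := by
  simpa using (hasFDerivAt_fderiv_of_contDiffAt_two hf).clm_apply (hasFDerivAt_const v x)

theorem fderiv_fderiv_comp_apply {f : F → G} {g : E → F} (hf : ContDiffAt 𝕜 2 f (g x))
    (hg : ContDiffAt 𝕜 2 g x) (v w : E) :
    fderiv 𝕜 (fderiv 𝕜 (f ∘ g)) x v w =
      fderiv 𝕜 (fderiv 𝕜 f) (g x) (fderiv 𝕜 g x v) (fderiv 𝕜 g x w) +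
        fderiv 𝕜 f (g x) (fderiv 𝕜 (fderiv 𝕜 g) x v w) := by
  have hfg : fderiv 𝕜 (f ∘ g) =ᶠ[𝓝 x] fun y => (fderiv 𝕜 f (g y)).comp (fderiv 𝕜 g y) := by
    filter_upwards [hg.continuousAt.eventually (eventually_differentiableAt_of_contDiffAt_two hf),
      eventually_differentiableAt_of_contDiffAt_two hg] with y hfy hgy using fderiv_comp y hfy hgy
  have hg' := (hg.differentiableAt (by simp)).hasFDerivAt
  have hf'g : HasFDerivAt (fun y => fderiv 𝕜 f (g y)) _ x :=
    (hasFDerivAt_fderiv_of_contDiffAt_two hf).comp x hg'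
  rw [hfg.fderiv_eq, (hf'g.clm_comp (hasFDerivAt_fderiv_of_contDiffAt_two hg)).fderiv]
  simp [add_comm]

theorem fderiv_fderiv_prodMk_apply {f : E → F} {g : E → G} (hf : ContDiffAt 𝕜 2 f x)
    (hg : ContDiffAt 𝕜 2 g x) (v w : E) :
    fderiv 𝕜 (fderiv 𝕜 fun y => (f y, g y)) x v w =
      (fderiv 𝕜 (fderiv 𝕜 f) x v w, fderiv 𝕜 (fderiv 𝕜 g) x v w) := by
  have hfg : (fun y => fderiv 𝕜 (fun y => (f y, g y)) y w) =ᶠ[𝓝 x]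
      fun y => (fderiv 𝕜 f y w, fderiv 𝕜 g y w) := by
    filter_upwards [eventually_differentiableAt_of_contDiffAt_two hf,
      eventually_differentiableAt_of_contDiffAt_two hg] with y hfy hgy
    rw [hfy.fderiv_prodMk hgy, ContinuousLinearMap.prod_apply]
  have hpair := (hasFDerivAt_fderiv_apply_const hf w).prodMk (hasFDerivAt_fderiv_apply_const hg w)
  exact DFunLike.congr_fun ((hasFDerivAt_fderiv_apply_const (hf.prodMk hg) w).unique
    (hpair.congr_of_eventuallyEq hfg)) v

end SecondDerivative

section Cross

variable {R : Type*} [CommRing R]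

/-- The determinant of the `2 × 2` matrix with columns `a` and `b`. -/
def cross (a b : R × R) : R := a.1 * b.2 - b.1 * a.2

theorem cross_add_right (a b c : R × R) : cross a (b + c) = cross a b + cross a c := by
  simp only [cross, Prod.fst_add, Prod.snd_add]
  ring

theorem map_eq_smul_add_smul {M 𝓕 : Type*} [AddCommGroup M] [Module R M] [FunLike 𝓕 (R × R) M]
    [LinearMapClass 𝓕 R (R × R) M] (L : 𝓕) (v : R × R) :
    L v = v.1 • L (1, 0) + v.2 • L (0, 1) := by
  rw [← map_smul, ← map_smul, ← map_add]
  simp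

theorem cross_map_map {𝓕 : Type*} [FunLike 𝓕 (R × R) (R × R)]
    [LinearMapClass 𝓕 R (R × R) (R × R)] (L : 𝓕) (a b : R × R) :
    cross (L a) (L b) = cross (L (1, 0)) (L (0, 1)) * cross a b := by
  rw [map_eq_smul_add_smul L a, map_eq_smul_add_smul L b]
  simp only [cross, Prod.fst_add, Prod.snd_add, Prod.smul_fst, Prod.smul_snd, smul_eq_mul]
  ring

end Cross

section InflectionForm

variable {𝕜 E : Type*} [NontriviallyNormedField 𝕜] [NormedAddCommGroup E] [NormedSpace 𝕜 E]

/-- The cubic form `v ↦ det (f'(x) v, f''(x) (v, v))` of a map `f` to the plane. It vanishes at `v`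
when the image under `f` of the line through `x` in the direction `v` has an inflection at `f x`. -/
def inflectionForm (f : E → 𝕜 × 𝕜) (x v : E) : 𝕜 :=
  cross (fderiv 𝕜 f x v) (fderiv 𝕜 (fderiv 𝕜 f) x v v)

theorem inflectionForm_comp {f : 𝕜 × 𝕜 → 𝕜 × 𝕜} {g : E → 𝕜 × 𝕜} {x : E}
    (hf : ContDiffAt 𝕜 2 f (g x)) (hg : ContDiffAt 𝕜 2 g x) (v : E) :
    inflectionForm (f ∘ g) x v =
      inflectionForm f (g x) (fderiv 𝕜 g x v) +
        cross (fderiv 𝕜 f (g x) (1, 0)) (fderiv 𝕜 f (g x) (0, 1)) * inflectionForm g x v := by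
  have hfg := fderiv_comp x (hf.differentiableAt (by simp)) (hg.differentiableAt (by simp))
  simp only [inflectionForm]
  rw [fderiv_fderiv_comp_apply hf hg, cross_add_right, hfg, ContinuousLinearMap.comp_apply,
    cross_map_map (fderiv 𝕜 f (g x)) (fderiv 𝕜 g x v) (fderiv 𝕜 (fderiv 𝕜 g) x v v)]

end InflectionForm

section BinaryCubic

variable {R : Type*} [CommRing R]

/-- The binary cubic form with coefficient vector `c`, as a function on the plane. The order and
signs of the coefficients are those for which the GL(3) derivatives `Vvec u₁ u₂ p` are the
coefficients of the inflection form of `(u₁, u₂)` divided by `Jac u₁ u₂ p`. -/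
def binaryCubic : (Fin 4 → R) →ₗ[R] R × R → R where
  toFun c v := c 0 * v.1 ^ 3 - c 1 * v.2 ^ 3 + c 2 * v.1 ^ 2 * v.2 - c 3 * v.1 * v.2 ^ 2
  map_add' c d := by
    ext v
    simp only [Pi.add_apply]
    ring
  map_smul' a c := by
    ext v
    simp only [Pi.smul_apply, smul_eq_mul, RingHom.id_apply]
    ring

theorem binaryCubic_apply (c : Fin 4 → R) (v : R × R) :
    binaryCubic c v =
      c 0 * v.1 ^ 3 - c 1 * v.2 ^ 3 + c 2 * v.1 ^ 2 * v.2 - c 3 * v.1 * v.2 ^ 2 :=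
  rfl

theorem binaryCubic_injective [NoZeroDivisors R] [NeZero (2 : R)] :
    Function.Injective (binaryCubic : (Fin 4 → R) →ₗ[R] R × R → R) := by
  refine (injective_iff_map_eq_zero _).2 fun c hc => ?_
  have h10 := congrFun hc (1, 0)
  have h01 := congrFun hc (0, 1)
  have h11 := congrFun hc (1, 1)
  have h1n := congrFun hc (1, -1)
  simp only [binaryCubic_apply, Pi.zero_apply] at h10 h01 h11 h1n
  have hc0 : c 0 = 0 := by linear_combination h10
  have hc1 : c 1 = 0 := by linear_combination -h01
  have hc2 : c 2 = 0 := mul_left_cancel₀ (two_ne_zero (α := R)) <| by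
    linear_combination h11 - h1n + 2 * hc1
  have hc3 : c 3 = 0 := by linear_combination hc0 - hc1 + hc2 - h11
  ext i
  fin_cases i <;> assumption

end BinaryCubic

section PartialDerivatives

open Filter Topology

variable {f g : ℂ × ℂ → ℂ} {p : ℂ × ℂ}

theorem pdx_eq_of_hasFDerivAt {f' : ℂ × ℂ →L[ℂ] ℂ} (hf : HasFDerivAt f f' p) :
    pdx f p = f' (1, 0) :=
  (hf.comp_hasDerivAt p.1 ((hasDerivAt_id p.1).prodMk (hasDerivAt_const p.1 p.2))).deriv

theorem pdy_eq_of_hasFDerivAt {f' : ℂ × ℂ →L[ℂ] ℂ} (hf : HasFDerivAt f f' p) :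
    pdy f p = f' (0, 1) :=
  (hf.comp_hasDerivAt p.2 ((hasDerivAt_const p.2 p.1).prodMk (hasDerivAt_id p.2))).deriv

theorem fderiv_eq_pdx_add_pdy (hf : DifferentiableAt ℂ f p) (v : ℂ × ℂ) :
    fderiv ℂ f p v = pdx f p * v.1 + pdy f p * v.2 := by
  rw [map_eq_smul_add_smul, pdx_eq_of_hasFDerivAt hf.hasFDerivAt,
    pdy_eq_of_hasFDerivAt hf.hasFDerivAt, smul_eq_mul, smul_eq_mul, mul_comm, mul_comm v.2]

theorem hasFDerivAt_pdx (hf : ContDiffAt ℂ 2 f p) :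
    HasFDerivAt (pdx f) ((fderiv ℂ (fderiv ℂ f) p).flip (1, 0)) p :=
  (hasFDerivAt_fderiv_apply_const hf (1, 0)).congr_of_eventuallyEq <|
    (eventually_differentiableAt_of_contDiffAt_two hf).mono fun _ hq =>
      pdx_eq_of_hasFDerivAt hq.hasFDerivAt

theorem hasFDerivAt_pdy (hf : ContDiffAt ℂ 2 f p) :
    HasFDerivAt (pdy f) ((fderiv ℂ (fderiv ℂ f) p).flip (0, 1)) p :=
  (hasFDerivAt_fderiv_apply_const hf (0, 1)).congr_of_eventuallyEq <|
    (eventually_differentiableAt_of_contDiffAt_two hf).mono fun _ hq =>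
      pdy_eq_of_hasFDerivAt hq.hasFDerivAt

theorem fderiv_fderiv_self_eq_pdx_pdy (hf : ContDiffAt ℂ 2 f p) (v : ℂ × ℂ) :
    fderiv ℂ (fderiv ℂ f) p v v =
      pdx (pdx f) p * v.1 ^ 2 + 2 * pdx (pdy f) p * v.1 * v.2 + pdy (pdy f) p * v.2 ^ 2 := by
  have hsymm : fderiv ℂ (fderiv ℂ f) p (0, 1) (1, 0) = fderiv ℂ (fderiv ℂ f) p (1, 0) (0, 1) :=
    hf.isSymmSndFDerivAt (by simp) (0, 1) (1, 0)
  rw [map_eq_smul_add_smul (fderiv ℂ (fderiv ℂ f) p v),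
    map_eq_smul_add_smul (fderiv ℂ (fderiv ℂ f) p) v, pdx_eq_of_hasFDerivAt (hasFDerivAt_pdx hf),
    pdx_eq_of_hasFDerivAt (hasFDerivAt_pdy hf), pdy_eq_of_hasFDerivAt (hasFDerivAt_pdy hf)]
  simp only [_root_.add_apply, _root_.smul_apply, ContinuousLinearMap.flip_apply, smul_eq_mul,
    hsymm]
  ring

theorem fderiv_prodMk_eq_pdx_add_pdy (hf : DifferentiableAt ℂ f p) (hg : DifferentiableAt ℂ g p)
    (v : ℂ × ℂ) :
    fderiv ℂ (fun q => (f q, g q)) p v =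
      (pdx f p * v.1 + pdy f p * v.2, pdx g p * v.1 + pdy g p * v.2) := by
  rw [hf.fderiv_prodMk hg, ContinuousLinearMap.prod_apply, fderiv_eq_pdx_add_pdy hf,
    fderiv_eq_pdx_add_pdy hg]

theorem cross_fderiv_prodMk_eq_jac (hf : DifferentiableAt ℂ f p) (hg : DifferentiableAt ℂ g p) :
    cross (fderiv ℂ (fun q => (f q, g q)) p (1, 0)) (fderiv ℂ (fun q => (f q, g q)) p (0, 1)) =
      Jac f g p := by
  rw [fderiv_prodMk_eq_pdx_add_pdy hf hg, fderiv_prodMk_eq_pdx_add_pdy hf hg]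
  simp only [cross, Jac]
  ring

end PartialDerivatives

section ChangeOfVariables

variable {u₁ u₂ w₁ w₂ : ℂ × ℂ → ℂ} {p : ℂ × ℂ}

theorem jac_comp (hu₁ : DifferentiableAt ℂ u₁ (w₁ p, w₂ p))
    (hu₂ : DifferentiableAt ℂ u₂ (w₁ p, w₂ p)) (hw₁ : DifferentiableAt ℂ w₁ p)
    (hw₂ : DifferentiableAt ℂ w₂ p) :
    Jac (fun q => u₁ (w₁ q, w₂ q)) (fun q => u₂ (w₁ q, w₂ q)) p =
      Jac u₁ u₂ (w₁ p, w₂ p) * Jac w₁ w₂ p := by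
  have hw := hw₁.prodMk hw₂
  have hcomp := fderiv_comp p (hu₁.prodMk hu₂) hw
  refine (cross_fderiv_prodMk_eq_jac (hu₁.comp p hw) (hu₂.comp p hw)).symm.trans ?_
  rw [← cross_fderiv_prodMk_eq_jac hu₁ hu₂, ← cross_fderiv_prodMk_eq_jac hw₁ hw₂,
    ← cross_map_map (fderiv ℂ (fun q => (u₁ q, u₂ q)) (w₁ p, w₂ p))]
  exact congrArg₂ cross (DFunLike.congr_fun hcomp (1, 0)) (DFunLike.congr_fun hcomp (0, 1))

theorem inflectionForm_eq_jac_mul_binaryCubic (hu₁ : ContDiffAt ℂ 2 u₁ p)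
    (hu₂ : ContDiffAt ℂ 2 u₂ p) (hJ : Jac u₁ u₂ p ≠ 0) (v : ℂ × ℂ) :
    inflectionForm (fun q => (u₁ q, u₂ q)) p v =
      Jac u₁ u₂ p * binaryCubic (Vvec u₁ u₂ p) v := by
  rw [inflectionForm, fderiv_fderiv_prodMk_apply hu₁ hu₂, fderiv_fderiv_self_eq_pdx_pdy hu₁,
    fderiv_fderiv_self_eq_pdx_pdy hu₂, fderiv_prodMk_eq_pdx_add_pdy
      (hu₁.differentiableAt (by simp)) (hu₂.differentiableAt (by simp))]
  simp only [cross, binaryCubic_apply, Vvec, brX, brY, sqX, sqY, cons_val]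
  field_simp
  ring

theorem binaryCubic_mmat_mulVec (c : Fin 4 → ℂ) (v : ℂ × ℂ) :
    binaryCubic (Mmat w₁ w₂ p *ᵥ c) v =
      binaryCubic c (pdx w₁ p * v.1 + pdy w₁ p * v.2, pdx w₂ p * v.1 + pdy w₂ p * v.2) := by
  simp only [binaryCubic_apply, Mmat, mulVec, dotProduct, Fin.sum_univ_four, of_apply, cons_val]
  ring

theorem vvec_comp (hw₁ : ContDiffAt ℂ 2 w₁ p) (hw₂ : ContDiffAt ℂ 2 w₂ p)
    (hu₁ : ContDiffAt ℂ 2 u₁ (w₁ p, w₂ p)) (hu₂ : ContDiffAt ℂ 2 u₂ (w₁ p, w₂ p))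
    (hD : Jac w₁ w₂ p ≠ 0) (hJ : Jac u₁ u₂ (w₁ p, w₂ p) ≠ 0) :
    Vvec (fun q => u₁ (w₁ q, w₂ q)) (fun q => u₂ (w₁ q, w₂ q)) p =
      (Jac w₁ w₂ p)⁻¹ • (Mmat w₁ w₂ p *ᵥ Vvec u₁ u₂ (w₁ p, w₂ p)) + Vvec w₁ w₂ p := by
  have hw := hw₁.prodMk hw₂
  have dw₁ := hw₁.differentiableAt two_ne_zero
  have dw₂ := hw₂.differentiableAt two_ne_zero
  have du₁ := hu₁.differentiableAt two_ne_zero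
  have du₂ := hu₂.differentiableAt two_ne_zero
  have hjac := jac_comp du₁ du₂ dw₁ dw₂
  have hjac_ne := hjac ▸ mul_ne_zero hJ hD
  refine binaryCubic_injective (funext fun v => mul_left_cancel₀ hjac_ne ?_)
  calc
    _ = inflectionForm ((fun q => (u₁ q, u₂ q)) ∘ fun q => (w₁ q, w₂ q)) p v :=
      (inflectionForm_eq_jac_mul_binaryCubic (hu₁.comp p hw) (hu₂.comp p hw) hjac_ne v).symm
    _ = inflectionForm (fun q => (u₁ q, u₂ q)) (w₁ p, w₂ p)
            (fderiv ℂ (fun q => (w₁ q, w₂ q)) p v) +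
          Jac u₁ u₂ (w₁ p, w₂ p) * inflectionForm (fun q => (w₁ q, w₂ q)) p v := by
      rw [← cross_fderiv_prodMk_eq_jac du₁ du₂]
      exact inflectionForm_comp (g := fun q => (w₁ q, w₂ q)) (hu₁.prodMk hu₂) hw v
    _ = Jac u₁ u₂ (w₁ p, w₂ p) * binaryCubic (Mmat w₁ w₂ p *ᵥ Vvec u₁ u₂ (w₁ p, w₂ p)) v +
          Jac u₁ u₂ (w₁ p, w₂ p) * (Jac w₁ w₂ p * binaryCubic (Vvec w₁ w₂ p) v) := by
      rw [inflectionForm_eq_jac_mul_binaryCubic hu₁ hu₂ hJ, binaryCubic_mmat_mulVec,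
        inflectionForm_eq_jac_mul_binaryCubic hw₁ hw₂ hD, fderiv_prodMk_eq_pdx_add_pdy dw₁ dw₂]
    _ = _ := by
      rw [hjac, map_add, map_smul, Pi.add_apply, Pi.smul_apply, smul_eq_mul]
      field_simp

end ChangeOfVariables

/-- **Main Proposition 1.** Change of independent variables law for the
four GL(3) derivatives. -/
theorem statement2 (Ω Ω' : Set (ℂ × ℂ)) (hΩ : IsOpen Ω) (hΩ' : IsOpen Ω')
    (w₁ w₂ : ℂ × ℂ → ℂ)
    (hw₁ : DifferentiableOn ℂ w₁ Ω) (hw₂ : DifferentiableOn ℂ w₂ Ω)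
    (hmaps : ∀ p ∈ Ω, (w₁ p, w₂ p) ∈ Ω')
    (hD : ∀ p ∈ Ω, Jac w₁ w₂ p ≠ 0)
    (u₁ u₂ : ℂ × ℂ → ℂ)
    (hu₁ : DifferentiableOn ℂ u₁ Ω') (hu₂ : DifferentiableOn ℂ u₂ Ω')
    (hJu : ∀ q ∈ Ω', Jac u₁ u₂ q ≠ 0) :
    ∀ p ∈ Ω,
      Vvec (fun q => u₁ (w₁ q, w₂ q)) (fun q => u₂ (w₁ q, w₂ q)) p =
        (Jac w₁ w₂ p)⁻¹ • (Mmat w₁ w₂ p *ᵥ Vvec u₁ u₂ (w₁ p, w₂ p))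
          + Vvec w₁ w₂ p := by
  intro p hp
  have hC2 {U : Set (ℂ × ℂ)} (hU : IsOpen U) {f : ℂ × ℂ → ℂ} (hf : DifferentiableOn ℂ f U)
      {q : ℂ × ℂ} (hq : q ∈ U) : ContDiffAt ℂ 2 f q :=
    (contDiffOn_infty.1 (contDiffOn_infty_of_differentiableOn hf hU) 2).contDiffAt
      (hU.mem_nhds hq)
  exact vvec_comp (hC2 hΩ hw₁ hp) (hC2 hΩ hw₂ hp) (hC2 hΩ' hu₁ (hmaps p hp))
    (hC2 hΩ' hu₂ (hmaps p hp)) (hD p hp) (hJu _ (hmaps p hp))
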